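/- arXiv:0704.3237 — 2 statements merged into one kernel-verified Lean document; each statement's English description precedes it below -/
import Mathlib

section
/- For every θ > 0 and p ≥ 1 there exists a constant C = C(θ,p) such that for every T > 0, every Banach space (B, |·|), and every continuous function R : [0,T]² → B, one has ‖R‖_θ ≤ C ( U_{θ+2/p, p}(R) + V_θ(R) ), where ‖R‖_θ = sup_{t ≠ s} |R_{ts}| / |t−s|^θ, U_{θ', p}(R) = ( ∫_{[0,T]²} ( |R_{ts}| / |t−s|^{θ'} )^p dt ds )^{1/p}, and V_θ(R) = inf_{θ₁ ∈ (0,θ)} sup_{t ≠ u ≠ s} |R_{st} − R_{ut} − R_{su}| / ( |t−u|^{θ₁} |u−s|^{θ−θ₁} ). -/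
open MeasureTheory ENNReal

noncomputable section

/-!
Chaining in the style of Garsia, Rodemich and Rumsey. The symmetrised modulus
`N x y = max ‖R x y‖ ‖R y x‖` satisfies a triangle inequality up to the error
`V * max |x - y| |y - z| ^ θ`, whatever the value of `θ₁`, so it suffices to bound such an `N`.

Let `G` be the Besov density of `N`, of total mass `A = U ^ p`. Call `x` a chain point at scale `e`
for the endpoint `t` if `|x - t|` is of order `e` and `∫ G x y dy ≤ 2 A / e`. Averaging shows that
next to every chain point `x` at scale `e` there is a chain point `y` at scale `e / 4` with
`G x y ≤ 32 A / e ^ 2`, that is, `N x y ≲ U e ^ θ`. By the triangle inequality, `N x t` then exceeds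
`N y t` by at most a multiple of `(U + V) e ^ θ`. Descending to scale `0`, where `N` vanishes by
continuity, and summing the geometric series bounds `N x t`. Finally, averaging over the middle of
the segment from `t` to `s` provides a chain point common to both endpoints.
-/

section GarsiaRodemichRumsey

open Set Filter Topology

/-! ### Averaging -/

lemma exists_mem_le_lintegral_div {X : Type*} [MeasurableSpace X] {μ : Measure X} {J : Set X}
    (hJ₀ : μ J ≠ 0) (hJ : μ J ≠ ∞) {f : X → ℝ≥0∞} (hf : AEMeasurable f μ) :
    ∃ x ∈ J, f x ≤ (∫⁻ y, f y ∂μ) / μ J := by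
  obtain ⟨x, hxJ, hx⟩ := exists_le_setLAverage hJ₀ hJ hf.restrict
  rw [setLAverage_eq] at hx
  exact ⟨x, hxJ, hx.trans (ENNReal.div_le_div_right (setLIntegral_le_lintegral _ _) _)⟩

lemma exists_mem_Ioo_le_of_lintegral_le {f : ℝ → ℝ≥0∞} (hf : AEMeasurable f) {A m : ℝ}
    (hm : 0 < m) (hfA : ∫⁻ y, f y ≤ ENNReal.ofReal A) (c : ℝ) :
    ∃ x ∈ Ioo c (c + m), f x ≤ ENNReal.ofReal (A / m) := by
  have hvol : volume (Ioo c (c + m)) = ENNReal.ofReal m := by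
    rw [Real.volume_Ioo, add_sub_cancel_left]
  obtain ⟨x, hx, hfx⟩ := exists_mem_le_lintegral_div (J := Ioo c (c + m))
    (hvol ▸ (ENNReal.ofReal_pos.2 hm).ne') (hvol ▸ ENNReal.ofReal_ne_top) hf
  refine ⟨x, hx, hfx.trans ?_⟩
  rw [hvol, ENNReal.ofReal_div_of_pos hm]
  gcongr

/-- Averaging `(∫ G y z dz) + (e / 4) * G x y` over `y`; the weight `e / 4` makes the bound on the
marginal reproduce itself at scale `e / 4`. -/
lemma exists_mem_Ioo_marginal_le_and_le {G : ℝ → ℝ → ℝ≥0∞} (hG : Measurable (Function.uncurry G))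
    {A e : ℝ} (hA : 0 ≤ A) (he : 0 < e) (hGA : ∫⁻ x, ∫⁻ y, G x y ≤ ENNReal.ofReal A) {x : ℝ}
    (hx : ∫⁻ y, G x y ≤ ENNReal.ofReal (2 * A / e)) (c : ℝ) :
    ∃ y ∈ Ioo c (c + 3 * e / 16), ∫⁻ z, G y z ≤ ENNReal.ofReal (2 * A / (e / 4)) ∧
      G x y ≤ ENNReal.ofReal (32 * A / e ^ 2) := by
  have hmarginal : Measurable fun x => ∫⁻ y, G x y := hG.lintegral_prod_right'
  have hGx : Measurable (G x) := hG.of_uncurry_left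
  have hint : ∫⁻ y, ((∫⁻ z, G y z) + ENNReal.ofReal (e / 4) * G x y)
      ≤ ENNReal.ofReal (3 * A / 2) :=
    calc ∫⁻ y, ((∫⁻ z, G y z) + ENNReal.ofReal (e / 4) * G x y)
      _ = (∫⁻ y, ∫⁻ z, G y z) + ENNReal.ofReal (e / 4) * ∫⁻ y, G x y := by
          rw [lintegral_add_left hmarginal, lintegral_const_mul _ hGx]
      _ ≤ ENNReal.ofReal A + ENNReal.ofReal (e / 4) * ENNReal.ofReal (2 * A / e) := by gcongr
      _ = ENNReal.ofReal (3 * A / 2) := by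
          rw [← ENNReal.ofReal_mul (by positivity), ← ENNReal.ofReal_add hA (by positivity)]
          congr 1; field_simp; ring
  obtain ⟨y, hy, hsum⟩ := exists_mem_Ioo_le_of_lintegral_le
    (hmarginal.add (hGx.const_mul _)).aemeasurable (show 0 < 3 * e / 16 by positivity) hint c
  refine ⟨y, hy, (le_self_add.trans hsum).trans_eq (by congr 1; field_simp; ring), ?_⟩
  have hweighted : ENNReal.ofReal (e / 4) * G x y ≤ _ := le_add_self.trans hsum
  rw [mul_comm, ← ENNReal.le_div_iff_mul_le (Or.inl (by positivity))
    (Or.inl ENNReal.ofReal_ne_top), ← ENNReal.ofReal_div_of_pos (by positivity)] at hweighted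
  exact hweighted.trans_eq (by congr 1; field_simp; ring)

/-! ### Besov seminorm and additivity defect -/

variable {B : Type*} [SeminormedAddCommGroup B] {I : Set ℝ} {R : ℝ → ℝ → B} {N : ℝ → ℝ → ℝ}
  {κ p θ U V t s e x : ℝ}

/-- The Besov-type quantity `U_{κ,p}(R)` over `I × I`. -/
def besovSeminorm (I : Set ℝ) (κ p : ℝ) (R : ℝ → ℝ → B) : ℝ≥0∞ :=
  (∫⁻ q in I ×ˢ I, ENNReal.ofReal (‖R q.1 q.2‖ / |q.1 - q.2| ^ κ) ^ p) ^ (1 / p)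

/-- The supremum in `V_{α + β}(R)`: how far `R` is from being additive on `I`, with `α` and `β` the
Hölder exponents of the two increments. -/
def additivityDefect (I : Set ℝ) (α β : ℝ) (R : ℝ → ℝ → B) : ℝ≥0∞ :=
  ⨆ (t : ℝ) (_ : t ∈ I) (u : ℝ) (_ : u ∈ I) (s : ℝ) (_ : s ∈ I) (_ : t ≠ u) (_ : u ≠ s),
    ENNReal.ofReal (‖R s t - R u t - R s u‖ / (|t - u| ^ α * |u - s| ^ β))

/-- The integrand of `besovSeminorm I κ p R ^ p`, set to zero outside `I × I`. -/
def besovDensity (I : Set ℝ) (κ p : ℝ) (R : ℝ → ℝ → B) (x y : ℝ) : ℝ≥0∞ :=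
  (I ×ˢ I).indicator (fun q => ENNReal.ofReal (‖R q.1 q.2‖ / |q.1 - q.2| ^ κ) ^ p) (x, y)

lemma measurable_besovDensity (hI : MeasurableSet I)
    (hR : ContinuousOn (fun q : ℝ × ℝ => R q.1 q.2) (I ×ˢ I)) :
    Measurable (Function.uncurry (besovDensity I κ p R)) := by
  classical
  have hnorm : Measurable ((I ×ˢ I).piecewise (fun q : ℝ × ℝ => ‖R q.1 q.2‖) 0) :=
    hR.norm.measurable_piecewise continuousOn_const (hI.prod hI)
  have hdist : Measurable fun q : ℝ × ℝ => |q.1 - q.2| ^ κ := by fun_prop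
  convert ((hnorm.div hdist).ennreal_ofReal.pow_const p).indicator (hI.prod hI) using 1
  exact indicator_congr fun q hq => by rw [Pi.div_apply, piecewise_eq_of_mem _ _ _ hq]

lemma lintegral_besovDensity (hp : 0 < p) (hI : MeasurableSet I)
    (hR : ContinuousOn (fun q : ℝ × ℝ => R q.1 q.2) (I ×ˢ I)) :
    ∫⁻ x, ∫⁻ y, besovDensity I κ p R x y = besovSeminorm I κ p R ^ p := by
  rw [besovSeminorm, ← ENNReal.rpow_mul, one_div_mul_cancel hp.ne', ENNReal.rpow_one,
    ← lintegral_indicator (hI.prod hI), Measure.volume_eq_prod]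
  exact (lintegral_prod _ (measurable_besovDensity hI hR).aemeasurable).symm

lemma lintegral_besovDensity_le (hp : 0 < p) (hI : MeasurableSet I)
    (hR : ContinuousOn (fun q : ℝ × ℝ => R q.1 q.2) (I ×ˢ I)) (hU : 0 ≤ U)
    (hRU : besovSeminorm I κ p R ≤ ENNReal.ofReal U) :
    ∫⁻ x, ∫⁻ y, besovDensity I κ p R x y ≤ ENNReal.ofReal (U ^ p) := by
  rw [lintegral_besovDensity hp hI hR, ← ENNReal.ofReal_rpow_of_nonneg hU hp.le]
  gcongr

/-- The exponent `θ + 2 / p` of `U` turns a density of order `e ^ (-2)` into the Hölder exponent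
`θ`. -/
lemma norm_le_of_besovDensity_le (hθ : 0 < θ) (hp : 0 < p) (hU : 0 ≤ U) (he : 0 < e) {c : ℝ}
    (hc : 0 ≤ c) {y : ℝ} (hx : x ∈ I) (hy : y ∈ I) (hxy : x ≠ y) (hxye : |x - y| ≤ 2 * e)
    (h : besovDensity I (θ + 2 / p) p R x y ≤ ENNReal.ofReal (c * U ^ p / e ^ 2)) :
    ‖R x y‖ ≤ 2 ^ θ * (4 * c) ^ (1 / p) * U * e ^ θ := by
  have hpos : 0 < |x - y| := abs_sub_pos.2 hxy
  rw [besovDensity, indicator_of_mem (mk_mem_prod hx hy), ← ENNReal.le_rpow_inv_iff hp, ← one_div,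
    ENNReal.ofReal_rpow_of_nonneg (by positivity) (by positivity),
    ENNReal.ofReal_le_ofReal_iff (by positivity), div_le_iff₀ (by positivity)] at h
  have htwo : ((2 * e) ^ 2) ^ (1 / p) = (2 * e) ^ (2 / p) := by
    rw [← Real.rpow_natCast, ← Real.rpow_mul (by positivity)]
    congr 1; push_cast; ring
  calc ‖R x y‖ ≤ (c * U ^ p / e ^ 2) ^ (1 / p) * |x - y| ^ (θ + 2 / p) := h
    _ ≤ (c * U ^ p / e ^ 2) ^ (1 / p) * (2 * e) ^ (θ + 2 / p) := by gcongr
    _ = (c * U ^ p / e ^ 2 * (2 * e) ^ 2) ^ (1 / p) * (2 * e) ^ θ := by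
        rw [Real.rpow_add (by positivity), ← htwo, Real.mul_rpow (y := (2 * e) ^ 2)
          (by positivity) (by positivity)]
        ring
    _ = (4 * c * U ^ p) ^ (1 / p) * (2 * e) ^ θ := by
        congr 2; field_simp; ring
    _ = 2 ^ θ * (4 * c) ^ (1 / p) * U * e ^ θ := by
        rw [Real.mul_rpow (by positivity) (by positivity), Real.mul_rpow two_pos.le he.le,
          ← Real.rpow_mul hU, mul_one_div_cancel hp.ne', Real.rpow_one]
        ring

/-! ### Chain points -/

lemma exists_Ioo_forall_mem_annulus (hI : I.OrdConnected) (ht : t ∈ I) (hs : s ∈ I) (he : 0 < e)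
    (hes : e ≤ |t - s|) :
    ∃ c, ∀ y ∈ Ioo c (c + 3 * e / 4), y ∈ I ∧ e / 4 < |y - t| ∧ |y - t| < e := by
  rcases le_total t s with hts | hst
  · rw [abs_of_nonpos (by linarith)] at hes
    refine ⟨t + e / 4, fun y hy => ⟨hI.out ht hs ⟨?_, ?_⟩, ?_⟩⟩
    · linarith [hy.1]
    · linarith [hy.2]
    · rw [abs_of_pos (by linarith [hy.1])]
      constructor <;> linarith [hy.1, hy.2]
  · rw [abs_of_nonneg (by linarith)] at hes
    refine ⟨t - e, fun y hy => ⟨hI.out hs ht ⟨?_, ?_⟩, ?_⟩⟩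
    · linarith [hy.1]
    · linarith [hy.2]
    · rw [abs_of_neg (by linarith [hy.2])]
      constructor <;> linarith [hy.1, hy.2]

lemma exists_Ioo_forall_mem_middle (hI : I.OrdConnected) (ht : t ∈ I) (hs : s ∈ I) :
    ∃ c, ∀ y ∈ Ioo c (c + |t - s| / 2), y ∈ I ∧ (|t - s| / 4 < |y - t| ∧ |y - t| < |t - s|) ∧
      (|t - s| / 4 < |y - s| ∧ |y - s| < |t - s|) := by
  wlog hts : t ≤ s generalizing t s
  · obtain ⟨c, hc⟩ := this hs ht (le_of_not_ge hts)
    rw [abs_sub_comm s t] at hc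
    exact ⟨c, fun y hy => ⟨(hc y hy).1, (hc y hy).2.symm⟩⟩
  rw [abs_of_nonpos (by linarith)]
  refine ⟨t + (s - t) / 4, fun y ⟨hy₁, hy₂⟩ => ⟨hI.out ht hs ⟨by linarith, by linarith⟩, ?_⟩⟩
  rw [abs_of_pos (by linarith : 0 < y - t), abs_of_neg (by linarith : y - s < 0)]
  refine ⟨⟨?_, ?_⟩, ?_, ?_⟩ <;> linarith

/-- `x` is admissible at scale `e` in a chain towards `t`: it lies at distance of order `e` from `t`
and the marginal at `x` of the density `G`, thought of as having total mass `A`, is small. -/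
structure IsChainPoint (I : Set ℝ) (G : ℝ → ℝ → ℝ≥0∞) (A t e x : ℝ) : Prop where
  mem : x ∈ I
  lt_abs_sub : e / 4 < |x - t|
  abs_sub_lt : |x - t| < e
  marginal_le : ∫⁻ y, G x y ≤ ENNReal.ofReal (2 * A / e)

namespace IsChainPoint

variable {G : ℝ → ℝ → ℝ≥0∞} {A y : ℝ}

lemma ne (hx : IsChainPoint I G A t e x) : x ≠ t := by
  rintro rfl
  have h₁ := hx.lt_abs_sub
  have h₂ := hx.abs_sub_lt
  rw [sub_self, abs_zero] at h₁ h₂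
  linarith

lemma ne_of_succ (hx : IsChainPoint I G A t e x) (hy : IsChainPoint I G A t (e / 4) y) :
    x ≠ y := by
  rintro rfl
  exact lt_asymm hx.lt_abs_sub hy.abs_sub_lt

lemma abs_sub_le_of_succ (hx : IsChainPoint I G A t e x) (hy : IsChainPoint I G A t (e / 4) y) :
    |x - y| ≤ 2 * e := by
  have := abs_sub_le x t y
  rw [abs_sub_comm t y] at this
  linarith [hx.abs_sub_lt, hy.abs_sub_lt, hy.lt_abs_sub]

lemma exists_succ (hI : I.OrdConnected) (ht : t ∈ I) (hs : s ∈ I)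
    (hG : Measurable (Function.uncurry G)) (hA : 0 ≤ A)
    (hGA : ∫⁻ x, ∫⁻ y, G x y ≤ ENNReal.ofReal A) (he : 0 < e) (hes : e ≤ |t - s|)
    (hx : IsChainPoint I G A t e x) :
    ∃ y, IsChainPoint I G A t (e / 4) y ∧ G x y ≤ ENNReal.ofReal (32 * A / e ^ 2) := by
  obtain ⟨c, hc⟩ := exists_Ioo_forall_mem_annulus hI ht hs (e := e / 4) (by positivity)
    (by linarith)
  obtain ⟨y, hy, hmarginal, hGxy⟩ :=
    exists_mem_Ioo_marginal_le_and_le hG hA he hGA hx.marginal_le c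
  obtain ⟨hyI, hlt, hgt⟩ := hc y (by convert hy using 2; ring)
  exact ⟨y, ⟨hyI, hlt, hgt, hmarginal⟩, hGxy⟩

end IsChainPoint

lemma exists_isChainPoint_both (hI : I.OrdConnected) (ht : t ∈ I) (hs : s ∈ I) (hts : t ≠ s)
    {G : ℝ → ℝ → ℝ≥0∞} (hG : Measurable (Function.uncurry G)) {A : ℝ}
    (hGA : ∫⁻ x, ∫⁻ y, G x y ≤ ENNReal.ofReal A) :
    ∃ x, IsChainPoint I G A t |t - s| x ∧ IsChainPoint I G A s |t - s| x := by
  obtain ⟨c, hc⟩ := exists_Ioo_forall_mem_middle hI ht hs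
  have hpos : 0 < |t - s| := abs_sub_pos.2 hts
  obtain ⟨x, hx, hle⟩ := exists_mem_Ioo_le_of_lintegral_le
    (hG.lintegral_prod_right' (ν := volume)).aemeasurable (half_pos hpos) hGA c
  obtain ⟨hxI, ⟨ht₁, ht₂⟩, hs₁, hs₂⟩ := hc x hx
  have hmarginal : ∫⁻ y, G x y ≤ ENNReal.ofReal (2 * A / |t - s|) :=
    hle.trans_eq (by congr 1; field_simp)
  exact ⟨x, ⟨hxI, ht₁, ht₂, hmarginal⟩, ⟨hxI, hs₁, hs₂, hmarginal⟩⟩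

lemma tendsto_of_isChainPoint {G : ℝ → ℝ → ℝ≥0∞} {A d : ℝ} {y : ℕ → ℝ}
    (hy : ∀ n, IsChainPoint I G A t (d / 4 ^ n) (y n)) : Tendsto y atTop (𝓝 t) := by
  refine tendsto_iff_dist_tendsto_zero.2 <|
    squeeze_zero (fun _ => dist_nonneg) (fun n => (hy n).abs_sub_lt.le) ?_
  exact tendsto_const_nhds.div_atTop (tendsto_pow_atTop_atTop_of_one_lt (by norm_num))

/-! ### Chaining under a relaxed triangle inequality -/

/-- The triangle inequality on `I` up to a `θ`-Hölder error with constant `V`. -/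
def RelaxedTriangle (I : Set ℝ) (θ V : ℝ) (N : ℝ → ℝ → ℝ) : Prop :=
  ∀ x ∈ I, ∀ y ∈ I, ∀ z ∈ I, x ≠ y → y ≠ z →
    N x z ≤ N x y + N y z + V * max |x - y| |y - z| ^ θ

/-- The total error `∑ k, 2 ^ θ * (128 ^ (1 / p) * U + V) * 4 ^ (-k * θ)` of a chain starting at
scale `1`. -/
def chainConst (θ p U V : ℝ) : ℝ :=
  2 ^ θ * (128 ^ (1 / p) * U + V) / (1 - (4 ^ θ)⁻¹)

lemma one_sub_inv_four_rpow_pos (hθ : 0 < θ) : 0 < 1 - ((4 : ℝ) ^ θ)⁻¹ :=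
  sub_pos.2 (inv_lt_one_of_one_lt₀ (Real.one_lt_rpow (by norm_num) hθ))

lemma chainConst_mul_rpow_sub (hθ : 0 < θ) (he : 0 ≤ e) :
    chainConst θ p U V * e ^ θ - chainConst θ p U V * (e / 4) ^ θ =
      2 ^ θ * (128 ^ (1 / p) * U + V) * e ^ θ := by
  have := (one_sub_inv_four_rpow_pos hθ).ne'
  rw [Real.div_rpow he (by norm_num), chainConst, div_eq_mul_inv (e ^ θ), ← mul_sub,
    ← mul_one_sub, mul_comm (e ^ θ), ← mul_assoc, div_mul_cancel₀ _ this]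

lemma IsChainPoint.exists_succ_norm_le (hI : I.OrdConnected) (hθ : 0 < θ) (hp : 0 < p)
    (hR : ContinuousOn (fun q : ℝ × ℝ => R q.1 q.2) (I ×ˢ I)) (hU : 0 ≤ U)
    (hRU : besovSeminorm I (θ + 2 / p) p R ≤ ENNReal.ofReal U) (ht : t ∈ I) (hs : s ∈ I)
    (he : 0 < e) (hes : e ≤ |t - s|)
    (hx : IsChainPoint I (besovDensity I (θ + 2 / p) p R) (U ^ p) t e x) :
    ∃ y, IsChainPoint I (besovDensity I (θ + 2 / p) p R) (U ^ p) t (e / 4) y ∧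
      ‖R x y‖ ≤ 2 ^ θ * 128 ^ (1 / p) * U * e ^ θ := by
  have hmass := lintegral_besovDensity_le hp hI.measurableSet hR hU hRU
  obtain ⟨y, hy, hxy⟩ := hx.exists_succ hI ht hs (measurable_besovDensity hI.measurableSet hR)
    (by positivity) hmass he hes
  refine ⟨y, hy, ?_⟩
  convert norm_le_of_besovDensity_le hθ hp hU he (by norm_num) hx.mem hy.mem (hx.ne_of_succ hy)
    (hx.abs_sub_le_of_succ hy) hxy using 5
  norm_num

lemma diagonal_eq_zero (hI : I.OrdConnected) (hθ : 0 < θ) (hp : 0 < p)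
    (hN : ContinuousOn (fun q : ℝ × ℝ => N q.1 q.2) (I ×ˢ I)) (hU : 0 ≤ U)
    (hNU : besovSeminorm I (θ + 2 / p) p N ≤ ENNReal.ofReal U) (ht : t ∈ I) (hs : s ∈ I)
    (hts : t ≠ s) {y : ℕ → ℝ}
    (hy : ∀ n, IsChainPoint I (besovDensity I (θ + 2 / p) p N) (U ^ p) t (|t - s| / 4 ^ n) (y n)) :
    N t t = 0 := by
  have hd : 0 < |t - s| := abs_sub_pos.2 hts
  choose z hz hyz using fun n => (hy n).exists_succ_norm_le hI hθ hp hN hU hNU ht hs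
    (by positivity) (div_le_self hd.le (one_le_pow₀ (by norm_num)))
  have hz' : Tendsto z atTop (𝓝 t) := by
    simp only [div_right_comm _ _ (4 : ℝ)] at hz
    exact tendsto_of_isChainPoint hz
  have hscale : Tendsto (fun n : ℕ => |t - s| / (4 : ℝ) ^ n) atTop (𝓝 0) :=
    tendsto_const_nhds.div_atTop (tendsto_pow_atTop_atTop_of_one_lt (by norm_num))
  refine tendsto_nhds_unique (l := atTop) (f := fun n => N (y n) (z n)) ?_
    (squeeze_zero_norm hyz ?_)
  · exact (hN (t, t) ⟨ht, ht⟩).tendsto.comp (tendsto_nhdsWithin_iff.2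
      ⟨(tendsto_of_isChainPoint hy).prodMk_nhds hz',
        Eventually.of_forall fun n => ⟨(hy n).mem, (hz n).mem⟩⟩)
  · simpa [hθ.ne'] using (hscale.rpow_const (Or.inr hθ.le)).const_mul
      (2 ^ θ * 128 ^ (1 / p) * U)

/-- The potential `N x t - chainConst θ p U V * e ^ θ` does not decrease along a chain, which
replaces the summation of a geometric series. -/
lemma IsChainPoint.exists_succ_potential_le (hI : I.OrdConnected) (hθ : 0 < θ) (hp : 0 < p)
    (hN : ContinuousOn (fun q : ℝ × ℝ => N q.1 q.2) (I ×ˢ I)) (hU : 0 ≤ U)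
    (hNU : besovSeminorm I (θ + 2 / p) p N ≤ ENNReal.ofReal U) (hV : 0 ≤ V)
    (hNV : RelaxedTriangle I θ V N) (ht : t ∈ I) (hs : s ∈ I) (he : 0 < e) (hes : e ≤ |t - s|)
    (hx : IsChainPoint I (besovDensity I (θ + 2 / p) p N) (U ^ p) t e x) :
    ∃ y, IsChainPoint I (besovDensity I (θ + 2 / p) p N) (U ^ p) t (e / 4) y ∧
      N x t - chainConst θ p U V * e ^ θ ≤ N y t - chainConst θ p U V * (e / 4) ^ θ := by
  obtain ⟨y, hy, hxy⟩ := hx.exists_succ_norm_le hI hθ hp hN hU hNU ht hs he hes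
  refine ⟨y, hy, ?_⟩
  have htriangle := hNV x hx.mem y hy.mem t ht (hx.ne_of_succ hy) hy.ne
  have herror : max |x - y| |y - t| ^ θ ≤ 2 ^ θ * e ^ θ := by
    rw [← Real.mul_rpow two_pos.le he.le]
    gcongr
    exact max_le (hx.abs_sub_le_of_succ hy) (by linarith [hy.abs_sub_lt])
  have hpotential := chainConst_mul_rpow_sub (p := p) (U := U) (V := V) hθ he.le
  linarith [le_of_abs_le hxy, mul_le_mul_of_nonneg_left herror hV]

lemma IsChainPoint.exists_potential_le (hI : I.OrdConnected) (hθ : 0 < θ) (hp : 0 < p)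
    (hN : ContinuousOn (fun q : ℝ × ℝ => N q.1 q.2) (I ×ˢ I)) (hU : 0 ≤ U)
    (hNU : besovSeminorm I (θ + 2 / p) p N ≤ ENNReal.ofReal U) (hV : 0 ≤ V)
    (hNV : RelaxedTriangle I θ V N) (ht : t ∈ I) (hs : s ∈ I) (he : 0 < e) (hes : e ≤ |t - s|)
    (hx : IsChainPoint I (besovDensity I (θ + 2 / p) p N) (U ^ p) t e x) (n : ℕ) :
    ∃ y, IsChainPoint I (besovDensity I (θ + 2 / p) p N) (U ^ p) t (e / 4 ^ n) y ∧
      N x t - chainConst θ p U V * e ^ θ ≤ N y t - chainConst θ p U V * (e / 4 ^ n) ^ θ := by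
  induction n with
  | zero => exact ⟨x, by simpa using hx, by simp⟩
  | succ n ih =>
    obtain ⟨y, hy, hxy⟩ := ih
    obtain ⟨z, hz, hyz⟩ := hy.exists_succ_potential_le hI hθ hp hN hU hNU hV hNV ht hs
      (by positivity) ((div_le_self he.le (one_le_pow₀ (by norm_num))).trans hes)
    rw [div_div, ← pow_succ] at hz hyz
    exact ⟨z, hz, hxy.trans hyz⟩

lemma chainConst_nonneg (hθ : 0 < θ) (hU : 0 ≤ U) (hV : 0 ≤ V) : 0 ≤ chainConst θ p U V := by
  have := one_sub_inv_four_rpow_pos hθ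
  unfold chainConst
  positivity

lemma IsChainPoint.le_chainConst_mul_rpow (hI : I.OrdConnected) (hθ : 0 < θ) (hp : 0 < p)
    (hN : ContinuousOn (fun q : ℝ × ℝ => N q.1 q.2) (I ×ˢ I)) (hU : 0 ≤ U)
    (hNU : besovSeminorm I (θ + 2 / p) p N ≤ ENNReal.ofReal U) (hV : 0 ≤ V)
    (hNV : RelaxedTriangle I θ V N) (ht : t ∈ I) (hs : s ∈ I) (hts : t ≠ s)
    (hx : IsChainPoint I (besovDensity I (θ + 2 / p) p N) (U ^ p) t |t - s| x) :
    N x t ≤ chainConst θ p U V * |t - s| ^ θ := by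
  choose y hy hxy using hx.exists_potential_le hI hθ hp hN hU hNU hV hNV ht hs
    (abs_sub_pos.2 hts) le_rfl
  have hlim : Tendsto (fun n => N (y n) t) atTop (𝓝 (N t t)) :=
    (hN (t, t) ⟨ht, ht⟩).tendsto.comp (tendsto_nhdsWithin_iff.2
      ⟨(tendsto_of_isChainPoint hy).prodMk_nhds tendsto_const_nhds,
        Eventually.of_forall fun n => ⟨(hy n).mem, ht⟩⟩)
  rw [diagonal_eq_zero hI hθ hp hN hU hNU ht hs hts hy] at hlim
  refine sub_nonpos.1 (ge_of_tendsto' hlim fun n => (hxy n).trans (sub_le_self _ ?_))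
  have := chainConst_nonneg (p := p) hθ hU hV
  positivity

theorem le_of_relaxedTriangle (hI : I.OrdConnected) (hθ : 0 < θ) (hp : 0 < p)
    (hN : ContinuousOn (fun q : ℝ × ℝ => N q.1 q.2) (I ×ˢ I))
    (hsymm : ∀ x y, N x y = N y x) (hU : 0 ≤ U)
    (hNU : besovSeminorm I (θ + 2 / p) p N ≤ ENNReal.ofReal U) (hV : 0 ≤ V)
    (hNV : RelaxedTriangle I θ V N) (ht : t ∈ I) (hs : s ∈ I) (hts : t ≠ s) :
    N t s ≤ (2 * chainConst θ p U V + V) * |t - s| ^ θ := by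
  have hmass := lintegral_besovDensity_le hp hI.measurableSet hN hU hNU
  obtain ⟨x, hxt, hxs⟩ := exists_isChainPoint_both hI ht hs hts
    (measurable_besovDensity hI.measurableSet hN) hmass
  have htriangle := hNV t ht x hxt.mem s hs hxt.ne.symm hxs.ne
  have hNxt := hxt.le_chainConst_mul_rpow hI hθ hp hN hU hNU hV hNV ht hs hts
  have hNxs := (abs_sub_comm t s ▸ hxs).le_chainConst_mul_rpow hI hθ hp hN hU hNU hV hNV hs ht
    hts.symm
  have herror : max |t - x| |x - s| ^ θ ≤ |t - s| ^ θ := by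
    gcongr
    exact max_le (abs_sub_comm t x ▸ hxt.abs_sub_lt.le) hxs.abs_sub_lt.le
  rw [hsymm x t] at hNxt
  rw [abs_sub_comm s t] at hNxs
  linarith [mul_le_mul_of_nonneg_left herror hV]

/-! ### The symmetrised modulus -/

/-- The symmetrised modulus of `R`, a scalar function to which chaining applies in both
directions. -/
def symmNorm (R : ℝ → ℝ → B) (x y : ℝ) : ℝ := max ‖R x y‖ ‖R y x‖

lemma symmNorm_comm (R : ℝ → ℝ → B) (x y : ℝ) : symmNorm R x y = symmNorm R y x :=
  max_comm _ _

lemma continuousOn_symmNorm (hR : ContinuousOn (fun q : ℝ × ℝ => R q.1 q.2) (I ×ˢ I)) :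
    ContinuousOn (fun q : ℝ × ℝ => symmNorm R q.1 q.2) (I ×ˢ I) :=
  hR.norm.sup (hR.comp continuous_swap.continuousOn fun _ hq => ⟨hq.2, hq.1⟩).norm

lemma besovSeminorm_symmNorm_le (hp : 0 < p) (hI : MeasurableSet I)
    (hR : ContinuousOn (fun q : ℝ × ℝ => R q.1 q.2) (I ×ˢ I)) :
    besovSeminorm I κ p (symmNorm R) ≤ 2 ^ (1 / p) * besovSeminorm I κ p R := by
  set f : ℝ × ℝ → ℝ≥0∞ := fun q => ENNReal.ofReal (‖R q.1 q.2‖ / |q.1 - q.2| ^ κ) ^ p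
  have hf : AEMeasurable f (volume.restrict (I ×ˢ I)) := by
    have := hR.norm.aemeasurable (hI.prod hI) (μ := volume)
    fun_prop
  have hmax (q : ℝ × ℝ) :
      ENNReal.ofReal (‖symmNorm R q.1 q.2‖ / |q.1 - q.2| ^ κ) ^ p ≤ f q + f q.swap := by
    have hnonneg : 0 ≤ symmNorm R q.1 q.2 := le_max_of_le_left (norm_nonneg _)
    rw [Real.norm_of_nonneg hnonneg]
    rcases max_choice ‖R q.1 q.2‖ ‖R q.2 q.1‖ with h | h
    · rw [symmNorm, h]
      exact le_self_add
    · rw [symmNorm, h, abs_sub_comm]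
      exact le_add_self
  have hswap : ∫⁻ q in I ×ˢ I, f q.swap = ∫⁻ q in I ×ˢ I, f q := by
    conv_lhs => rw [← preimage_swap_prod]
    exact Measure.measurePreserving_swap.setLIntegral_comp_preimage_emb
      MeasurableEquiv.prodComm.measurableEmbedding f (I ×ˢ I)
  calc besovSeminorm I κ p (symmNorm R)
    _ ≤ (∫⁻ q in I ×ˢ I, (f q + f q.swap)) ^ (1 / p) := by
        unfold besovSeminorm
        gcongr with q
        exact hmax q
    _ = 2 ^ (1 / p) * besovSeminorm I κ p R := by
        rw [lintegral_add_left' hf, hswap, ← two_mul,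
          ENNReal.mul_rpow_of_nonneg _ _ (by positivity)]
        rfl

lemma norm_sub_sub_le_of_additivityDefect_le {α β u : ℝ} (hV : 0 ≤ V)
    (hRV : additivityDefect I α β R ≤ ENNReal.ofReal V) (ht : t ∈ I) (hu : u ∈ I) (hs : s ∈ I)
    (htu : t ≠ u) (hus : u ≠ s) :
    ‖R s t - R u t - R s u‖ ≤ V * (|t - u| ^ α * |u - s| ^ β) := by
  have : 0 < |t - u| := abs_sub_pos.2 htu
  have : 0 < |u - s| := abs_sub_pos.2 hus
  have hterm : ENNReal.ofReal (‖R s t - R u t - R s u‖ / (|t - u| ^ α * |u - s| ^ β)) ≤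
      ENNReal.ofReal V := by
    simp only [additivityDefect, iSup_le_iff] at hRV
    exact hRV t ht u hu s hs htu hus
  rwa [ENNReal.ofReal_le_ofReal_iff hV, div_le_iff₀ (by positivity)] at hterm

lemma rpow_mul_rpow_sub_le_max_rpow {a b α : ℝ} (ha : 0 ≤ a) (hb : 0 ≤ b) (hα : α ∈ Icc 0 θ) :
    a ^ α * b ^ (θ - α) ≤ max a b ^ θ := by
  have hθα : 0 ≤ θ - α := sub_nonneg.2 hα.2
  calc a ^ α * b ^ (θ - α) ≤ max a b ^ α * max a b ^ (θ - α) :=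
        mul_le_mul (Real.rpow_le_rpow ha (le_max_left _ _) hα.1)
          (Real.rpow_le_rpow hb (le_max_right _ _) hθα) (by positivity) (by positivity)
    _ = max a b ^ θ := by
        rw [← Real.rpow_add_of_nonneg (by positivity) hα.1 hθα, add_sub_cancel]

lemma relaxedTriangle_symmNorm {α : ℝ} (hα : α ∈ Icc 0 θ) (hV : 0 ≤ V)
    (hRV : additivityDefect I α (θ - α) R ≤ ENNReal.ofReal V) :
    RelaxedTriangle I θ V (symmNorm R) := by
  have htriangle {x y z : ℝ} (hx : x ∈ I) (hy : y ∈ I) (hz : z ∈ I) (hxy : x ≠ y) (hyz : y ≠ z) :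
      ‖R x z‖ ≤ ‖R x y‖ + ‖R y z‖ + V * max |x - y| |y - z| ^ θ := by
    have hdefect := norm_sub_sub_le_of_additivityDefect_le hV hRV hz hy hx hyz.symm hxy.symm
    have hmax := rpow_mul_rpow_sub_le_max_rpow (abs_nonneg (z - y)) (abs_nonneg (y - x)) hα
    rw [max_comm, abs_sub_comm y x, abs_sub_comm z y] at hmax
    rw [abs_sub_comm y x, abs_sub_comm z y, sub_sub] at hdefect
    linarith [norm_le_norm_add_norm_sub' (R x z) (R y z + R x y), norm_add_le (R y z) (R x y),
      mul_le_mul_of_nonneg_left hmax hV]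
  intro x hx y hy z hz hxy hyz
  refine max_le ((htriangle hx hy hz hxy hyz).trans ?_)
    ((htriangle hz hy hx hyz.symm hxy.symm).trans ?_)
  · gcongr <;> exact le_max_left _ _
  · rw [abs_sub_comm z y, abs_sub_comm y x, max_comm, add_comm ‖R z y‖]
    gcongr <;> exact le_max_right _ _

/-! ### The inequality -/

/-- The constant `C(θ, p)` of the two-parameter Garsia–Rodemich–Rumsey inequality; besides the two
chains it accounts for the factor `2 ^ (1 / p)` lost by symmetrising `R`. -/
def grrConst (θ p : ℝ) : ℝ :=
  2 * (2 ^ θ * 256 ^ (1 / p)) / (1 - (4 ^ θ)⁻¹) + 1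

lemma grrConst_pos (hθ : 0 < θ) : 0 < grrConst θ p := by
  have := one_sub_inv_four_rpow_pos hθ
  unfold grrConst
  positivity

lemma two_mul_chainConst_add_le (hθ : 0 < θ) (hp : 0 < p) (hU : 0 ≤ U) (hV : 0 ≤ V) :
    2 * chainConst θ p (2 ^ (1 / p) * U) V + V ≤ grrConst θ p * (U + V) := by
  have hpos := one_sub_inv_four_rpow_pos hθ
  have h256 : (128 : ℝ) ^ (1 / p) * 2 ^ (1 / p) = 256 ^ (1 / p) := by
    rw [← Real.mul_rpow (by norm_num) (by norm_num)]
    norm_num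
  have hone : (1 : ℝ) ≤ 256 ^ (1 / p) := Real.one_le_rpow (by norm_num) (by positivity)
  calc 2 * chainConst θ p (2 ^ (1 / p) * U) V + V
    _ = 2 * (2 ^ θ * (256 ^ (1 / p) * U + 1 * V)) / (1 - (4 ^ θ)⁻¹) + V := by
        rw [chainConst, ← h256]
        ring
    _ ≤ 2 * (2 ^ θ * (256 ^ (1 / p) * U + 256 ^ (1 / p) * V)) / (1 - (4 ^ θ)⁻¹) + (U + V) := by
        gcongr
        linarith
    _ = grrConst θ p * (U + V) := by
        rw [grrConst]
        ring

theorem norm_le_grrConst_mul (hI : I.OrdConnected) (hθ : 0 < θ) (hp : 0 < p)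
    (hR : ContinuousOn (fun q : ℝ × ℝ => R q.1 q.2) (I ×ˢ I)) (hU : 0 ≤ U)
    (hRU : besovSeminorm I (θ + 2 / p) p R ≤ ENNReal.ofReal U) {α : ℝ} (hα : α ∈ Icc 0 θ)
    (hV : 0 ≤ V) (hRV : additivityDefect I α (θ - α) R ≤ ENNReal.ofReal V) (ht : t ∈ I)
    (hs : s ∈ I) (hts : t ≠ s) :
    ‖R t s‖ ≤ grrConst θ p * (U + V) * |t - s| ^ θ := by
  have hsymmU : besovSeminorm I (θ + 2 / p) p (symmNorm R) ≤
      ENNReal.ofReal (2 ^ (1 / p) * U) := by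
    refine (besovSeminorm_symmNorm_le hp hI.measurableSet hR).trans ?_
    rw [ENNReal.ofReal_mul (by positivity), ← ENNReal.ofReal_rpow_of_pos two_pos,
      ENNReal.ofReal_ofNat]
    gcongr
  calc ‖R t s‖ ≤ symmNorm R t s := le_max_left _ _
    _ ≤ (2 * chainConst θ p (2 ^ (1 / p) * U) V + V) * |t - s| ^ θ :=
        le_of_relaxedTriangle hI hθ hp (continuousOn_symmNorm hR) (symmNorm_comm R)
          (by positivity) hsymmU hV (relaxedTriangle_symmNorm hα hV hRV) ht hs hts
    _ ≤ grrConst θ p * (U + V) * |t - s| ^ θ := by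
        gcongr
        exact two_mul_chainConst_add_le hθ hp hU hV

theorem statement8_general (hI : I.OrdConnected) (hθ : 0 < θ) (hp : 0 < p)
    (hR : ContinuousOn (fun q : ℝ × ℝ => R q.1 q.2) (I ×ˢ I)) (ht : t ∈ I) (hs : s ∈ I)
    (hts : t ≠ s) :
    ENNReal.ofReal (‖R t s‖ / |t - s| ^ θ) ≤ ENNReal.ofReal (grrConst θ p) *
      (besovSeminorm I (θ + 2 / p) p R + ⨅ α ∈ Icc 0 θ, additivityDefect I α (θ - α) R) := by
  have hC := ENNReal.ofReal_pos.2 (grrConst_pos (p := p) hθ)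
  simp only [ENNReal.add_iInf, ENNReal.mul_iInf_of_ne hC.ne' ENNReal.ofReal_ne_top]
  refine le_iInf₂ fun α hα => ?_
  rcases eq_or_ne (besovSeminorm I (θ + 2 / p) p R) ∞ with hU | hU
  · simp [hU, ENNReal.mul_top hC.ne']
  rcases eq_or_ne (additivityDefect I α (θ - α) R) ∞ with hV | hV
  · simp [hV, ENNReal.mul_top hC.ne']
  have : 0 < |t - s| := abs_sub_pos.2 hts
  rw [← ENNReal.ofReal_toReal hU, ← ENNReal.ofReal_toReal hV,
    ← ENNReal.ofReal_add ENNReal.toReal_nonneg ENNReal.toReal_nonneg,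
    ← ENNReal.ofReal_mul (grrConst_pos hθ).le]
  refine ENNReal.ofReal_le_ofReal ((div_le_iff₀ (by positivity)).2 ?_)
  exact norm_le_grrConst_mul hI hθ hp hR ENNReal.toReal_nonneg (ENNReal.ofReal_toReal hU).ge hα
    ENNReal.toReal_nonneg (ENNReal.ofReal_toReal hV).ge ht hs hts

end GarsiaRodemichRumsey

/-- Two-parameter Garsia–Rodemich–Rumsey inequality: for `θ > 0`, `p ≥ 1`
there is `C = C(θ,p)` such that for every Banach space `B` and continuous
`R : [0,T]² → B`, `‖R‖_θ ≤ C (U_{θ+2/p,p}(R) + V_θ(R))`. The norms/quantities are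
`‖R‖_θ = sup_{t≠s} |R_{ts}|/|t−s|^θ`,
`U_{θ',p}(R) = (∫∫ (|R_{ts}|/|t−s|^{θ'})^p)^{1/p}` and
`V_θ(R) = inf_{θ₁∈(0,θ)} sup_{t≠u≠s} |R_{st}−R_{ut}−R_{su}|/(|t−u|^{θ₁}|u−s|^{θ−θ₁})`,
computed in `[0,∞]`. -/
theorem statement8 (θ p : ℝ) (hθ : 0 < θ) (hp : 1 ≤ p) :
    ∃ C : ℝ, 0 < C ∧
      ∀ (T : ℝ), 0 < T →
        ∀ (B : Type) (_ : NormedAddCommGroup B) (_ : NormedSpace ℝ B) (_ : CompleteSpace B),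
          ∀ R : ℝ → ℝ → B,
            ContinuousOn (fun q : ℝ × ℝ => R q.1 q.2)
              (Set.Icc 0 T ×ˢ Set.Icc 0 T) →
            ∀ t ∈ Set.Icc (0 : ℝ) T, ∀ s ∈ Set.Icc (0 : ℝ) T, t ≠ s →
              ENNReal.ofReal (‖R t s‖ / |t - s| ^ θ) ≤
                ENNReal.ofReal C *
                  ((∫⁻ q in Set.Icc (0 : ℝ) T ×ˢ Set.Icc (0 : ℝ) T,
                      ENNReal.ofReal (‖R q.1 q.2‖ / |q.1 - q.2| ^ (θ + 2 / p)) ^ p) ^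
                        (1 / p) +
                    ⨅ (θ₁ : ℝ) (_ : θ₁ ∈ Set.Ioo (0 : ℝ) θ),
                      ⨆ (t' : ℝ) (_ : t' ∈ Set.Icc (0 : ℝ) T)
                        (u : ℝ) (_ : u ∈ Set.Icc (0 : ℝ) T)
                        (s' : ℝ) (_ : s' ∈ Set.Icc (0 : ℝ) T)
                        (_ : t' ≠ u) (_ : u ≠ s'),
                        ENNReal.ofReal (‖R s' t' - R u t' - R s' u‖ /
                          (|t' - u| ^ θ₁ * |u - s'| ^ (θ - θ₁)))) := by
  refine ⟨grrConst θ p, grrConst_pos hθ, fun T _ B _ _ _ R hR t ht s hs hts => ?_⟩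
  refine (statement8_general Set.ordConnected_Icc hθ (one_pos.trans_le hp) hR ht hs hts).trans ?_
  have hIoo : ∀ α ∈ Set.Ioo 0 θ, α ∈ Set.Icc 0 θ := fun _ hα => Set.Ioo_subset_Icc_self hα
  exact mul_le_mul_right (add_le_add_right (biInf_mono hIoo) _) _
end
end

section
/- Let d ≥ 1 and s > 0. Let μ be a probability measure on the space C(ℝ, ℝ^d) of continuous paths X : ℝ → ℝ^d which is invariant under time shifts (for every u ∈ ℝ the map X ↦ X(·+u) preserves μ), and suppose there exist constants c, θ > 0 such that μ( max_{0 ≤ t ≤ 1} |X_t| ≥ a ) ≤ c e^{−θ a^{s+1}} for all a > 0. Then there exists a constant C > 0 such that for μ-almost every path X there is a finite number R(X) with |X_t| ≤ ( C log(|t| + 1) )^{1/(s+1)} + R(X) for all t ∈ ℝ. -/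
/-!
By stationarity the event that `|X|` reaches the level `(A log(|n| + 2))^{1/p}` on `[n, n + 1]` has
probability at most `c (|n| + 2)^{-θA}`, which is summable over `n : ℤ` as soon as `A > 1/θ`. By
Borel–Cantelli almost every path stays below these levels outside finitely many of the intervals,
and it is bounded on the union of those. Passing from `A log(|⌊t⌋| + 2)` to `C log(|t| + 1)` with
`A < C` costs only an additive constant, so every `C > 1/θ` works.
-/

open MeasureTheory

noncomputable section

/-- The path space `C(ℝ, ℝ^d)` with the topology of uniform convergence on compacts is
equipped with its Borel σ-field. -/
instance pathMeasurableSpace (d : ℕ) :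
    MeasurableSpace C(ℝ, EuclideanSpace ℝ (Fin d)) := borel _

lemma exp_neg_mul_rpow_log_rpow {p A x : ℝ} (hp : p ≠ 0) (hA : 0 ≤ A) (hx : 1 ≤ x) (θ : ℝ) :
    Real.exp (-θ * ((A * Real.log x) ^ (1 / p)) ^ p) = x ^ (-(θ * A)) := by
  rw [one_div, Real.rpow_inv_rpow (mul_nonneg hA (Real.log_nonneg hx)) hp,
    Real.rpow_def_of_pos (by linarith)]
  ring_nf

lemma summable_abs_intCast_add_rpow_neg {a k : ℝ} (ha : 0 ≤ a) (hk : 1 < k) :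
    Summable fun n : ℤ => (|(n : ℝ)| + a) ^ (-k) := by
  have hnat : Summable fun n : ℕ => ((n : ℝ) + a) ^ (-k) := by
    refine ((Real.summable_one_div_nat_add_rpow a k).2 hk).congr fun n => ?_
    have hna : 0 ≤ (n : ℝ) + a := by positivity
    rw [abs_of_nonneg hna, Real.rpow_neg hna, one_div]
  exact .of_nat_of_neg (by simpa using hnat) (by simpa using hnat)

lemma exists_rpow_mul_add_le_rpow_mul_add {A B C q : ℝ} (hA : 0 ≤ A) (hAC : A < C) (hB : 0 ≤ B)
    (hq : 0 ≤ q) : ∃ R, ∀ y, 0 ≤ y → (A * (y + B)) ^ q ≤ (C * y) ^ q + R := by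
  have hC : 0 ≤ C := hA.trans hAC.le
  have hCA : 0 < C - A := sub_pos.2 hAC
  refine ⟨(C * (A * B) / (C - A)) ^ q, fun y hy => ?_⟩
  rcases le_total (A * (y + B)) (C * y) with hlarge | hsmall
  · calc (A * (y + B)) ^ q ≤ (C * y) ^ q := by gcongr
      _ ≤ (C * y) ^ q + (C * (A * B) / (C - A)) ^ q := le_add_of_nonneg_right (by positivity)
  · have hle : A * (y + B) ≤ C * (A * B) / (C - A) := by
      rw [le_div_iff₀ hCA]
      nlinarith [mul_le_mul_of_nonneg_left hsmall hA]
    calc (A * (y + B)) ^ q ≤ (C * (A * B) / (C - A)) ^ q := by gcongr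
      _ ≤ (C * y) ^ q + (C * (A * B) / (C - A)) ^ q := le_add_of_nonneg_left (by positivity)

lemma log_abs_floor_add_two_le (t : ℝ) :
    Real.log (|(⌊t⌋ : ℝ)| + 2) ≤ Real.log (|t| + 1) + Real.log 3 := by
  have hfloor : |(⌊t⌋ : ℝ)| ≤ |t| + 1 := by
    rw [abs_le]
    constructor <;> linarith [neg_abs_le t, le_abs_self t, Int.floor_le t, Int.lt_floor_add_one t]
  rw [← Real.log_mul (by positivity) (by norm_num)]
  exact Real.log_le_log (by positivity) (by linarith [abs_nonneg t])

lemma exists_rpow_log_floor_le_rpow_log_add {A C q : ℝ} (hA : 0 ≤ A) (hAC : A < C) (hq : 0 ≤ q) :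
    ∃ R, ∀ t : ℝ, (A * Real.log (|(⌊t⌋ : ℝ)| + 2)) ^ q ≤ (C * Real.log (|t| + 1)) ^ q + R := by
  obtain ⟨R, hR⟩ := exists_rpow_mul_add_le_rpow_mul_add hA hAC
    (Real.log_nonneg (show (1 : ℝ) ≤ 3 by norm_num)) hq
  refine ⟨R, fun t => le_trans ?_ (hR _ (Real.log_nonneg (by linarith [abs_nonneg t])))⟩
  have hlog : 0 ≤ Real.log (|(⌊t⌋ : ℝ)| + 2) :=
    Real.log_nonneg (by linarith [abs_nonneg (⌊t⌋ : ℝ)])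
  gcongr
  exact log_abs_floor_add_two_le t

variable {E : Type*} [SeminormedAddGroup E]

lemma exists_norm_le_add_of_finite_exceedances {f : ℝ → E} (hf : Continuous f) {b : ℤ → ℝ}
    (hb : ∀ n, 0 ≤ b n) (hfin : {n : ℤ | ∃ t ∈ Set.Icc (n : ℝ) (n + 1), b n ≤ ‖f t‖}.Finite) :
    ∃ R, ∀ t, ‖f t‖ ≤ b ⌊t⌋ + R := by
  obtain ⟨M, hM⟩ := (hfin.isCompact_biUnion fun n _ =>
    isCompact_Icc (a := (n : ℝ)) (b := n + 1)).exists_bound_of_continuousOn hf.continuousOn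
  refine ⟨max M 0, fun t => ?_⟩
  have ht : t ∈ Set.Icc (⌊t⌋ : ℝ) (⌊t⌋ + 1) := ⟨Int.floor_le t, (Int.lt_floor_add_one t).le⟩
  rcases le_or_gt (b ⌊t⌋) ‖f t‖ with hexceed | hbelow
  · have := hM t (Set.mem_biUnion (show ⌊t⌋ ∈ {n : ℤ | _} from ⟨t, ht, hexceed⟩) ht)
    linarith [hb ⌊t⌋, le_max_left M 0]
  · linarith [le_max_right M 0]

variable {Ω : Type*} [MeasurableSpace Ω] {μ : Measure Ω}

lemma ae_exists_norm_le_log_rpow_add {X : ℝ → Ω → E} (hX : ∀ᵐ ω ∂μ, Continuous (X · ω))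
    {p θ c C : ℝ} (hp : 0 < p) (hθ : 0 < θ) (hC : θ⁻¹ < C)
    (htail : ∀ (n : ℤ) (a : ℝ), 0 < a →
      μ {ω | ∃ t ∈ Set.Icc (n : ℝ) (n + 1), a ≤ ‖X t ω‖} ≤
        ENNReal.ofReal (c * Real.exp (-θ * a ^ p))) :
    ∀ᵐ ω ∂μ, ∃ R : ℝ, ∀ t : ℝ, ‖X t ω‖ ≤ (C * Real.log (|t| + 1)) ^ (1 / p) + R := by
  obtain ⟨A, hθA, hAC⟩ := exists_between hC
  have hA : 0 < A := (inv_pos.2 hθ).trans hθA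
  let level : ℤ → ℝ := fun n => (A * Real.log (|(n : ℝ)| + 2)) ^ (1 / p)
  have habs (n : ℤ) : 1 < |(n : ℝ)| + 2 := by linarith [abs_nonneg (n : ℝ)]
  have hlevel (n : ℤ) : 0 < level n := Real.rpow_pos_of_pos (mul_pos hA (Real.log_pos (habs n))) _
  have hexceed (n : ℤ) : μ {ω | ∃ t ∈ Set.Icc (n : ℝ) (n + 1), level n ≤ ‖X t ω‖} ≤
      ENNReal.ofReal (c * (|(n : ℝ)| + 2) ^ (-(θ * A))) := by
    simpa only [level, exp_neg_mul_rpow_log_rpow hp.ne' hA.le (habs n).le θ]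
      using htail n (level n) (hlevel n)
  have hsummable : Summable fun n : ℤ => c * (|(n : ℝ)| + 2) ^ (-(θ * A)) :=
    (summable_abs_intCast_add_rpow_neg zero_le_two ((inv_lt_iff_one_lt_mul₀' hθ).1 hθA)).mul_left c
  have hfinite := ae_finite_setOfPred_mem
    (ne_top_of_le_ne_top hsummable.tsum_ofReal_ne_top (ENNReal.tsum_le_tsum hexceed))
  obtain ⟨R₁, hR₁⟩ := exists_rpow_log_floor_le_rpow_log_add hA.le hAC (one_div_pos.2 hp).le
  filter_upwards [hX, hfinite] with ω hcont hfin
  obtain ⟨R₂, hR₂⟩ :=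
    exists_norm_le_add_of_finite_exceedances hcont (fun n => (hlevel n).le) hfin
  exact ⟨R₁ + R₂, fun t => by linarith [hR₁ t, hR₂ t]⟩

variable [MeasurableSpace C(ℝ, E)] {ν : Measure C(ℝ, E)}

lemma measure_exceedance_Icc_add_one_le {u : ℝ}
    (hshift : MeasurePreserving (fun X : C(ℝ, E) => X.comp (.addRight u)) ν ν) (a : ℝ) :
    ν {X | ∃ t ∈ Set.Icc u (u + 1), a ≤ ‖X t‖} ≤ ν {X | ∃ t ∈ Set.Icc (0 : ℝ) 1, a ≤ ‖X t‖} := by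
  calc ν {X | ∃ t ∈ Set.Icc u (u + 1), a ≤ ‖X t‖}
      ≤ ν ((fun X => X.comp (.addRight u)) ⁻¹' {X | ∃ t ∈ Set.Icc (0 : ℝ) 1, a ≤ ‖X t‖}) := by
        refine measure_mono ?_
        rintro X ⟨t, ⟨hut, htu⟩, hat⟩
        exact ⟨t - u, ⟨by linarith, by linarith⟩, by simpa using hat⟩
    _ ≤ ν {X | ∃ t ∈ Set.Icc (0 : ℝ) 1, a ≤ ‖X t‖} := hshift.measure_preimage_le _

theorem statement14_general {p θ c C : ℝ} (hp : 0 < p) (hθ : 0 < θ) (hC : θ⁻¹ < C)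
    (hshift : ∀ n : ℤ, MeasurePreserving (fun X : C(ℝ, E) => X.comp (.addRight (n : ℝ))) ν ν)
    (htail : ∀ a : ℝ, 0 < a →
      ν {X | ∃ t ∈ Set.Icc (0 : ℝ) 1, a ≤ ‖X t‖} ≤ ENNReal.ofReal (c * Real.exp (-θ * a ^ p))) :
    ∀ᵐ X ∂ν, ∃ R : ℝ, ∀ t : ℝ, ‖X t‖ ≤ (C * Real.log (|t| + 1)) ^ (1 / p) + R :=
  ae_exists_norm_le_log_rpow_add (X := fun t (X : C(ℝ, E)) => X t)
    (.of_forall (·.continuous)) hp hθ hC fun n a ha =>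
      (measure_exceedance_Icc_add_one_le (hshift n) a).trans (htail a ha)

/-- If `μ` is a time-shift invariant probability measure on
`C(ℝ, ℝ^d)` with the tail bound `μ(max_{0≤t≤1} |X_t| ≥ a) ≤ c e^{−θ a^{s+1}}`, then there
is `C > 0` such that `μ`-almost every path satisfies
`|X_t| ≤ (C log(|t|+1))^{1/(s+1)} + R(X)` for all `t`, with a path-dependent finite `R(X)`. -/
theorem statement14 (d : ℕ) (hd : 1 ≤ d) (s : ℝ) (hs : 0 < s)
    (μ : Measure C(ℝ, EuclideanSpace ℝ (Fin d))) (hprob : IsProbabilityMeasure μ)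
    -- invariance under every time shift `X ↦ X(· + u)`
    (hshift : ∀ u : ℝ,
      Measure.map
        (fun X : C(ℝ, EuclideanSpace ℝ (Fin d)) =>
          X.comp ⟨fun t => t + u, by continuity⟩) μ = μ)
    -- the tail bound for the maximum over a unit time interval
    (c θ : ℝ) (hc : 0 < c) (hθ : 0 < θ)
    (htail : ∀ a : ℝ, 0 < a →
      μ {X : C(ℝ, EuclideanSpace ℝ (Fin d)) | ∃ t ∈ Set.Icc (0 : ℝ) 1, a ≤ ‖X t‖} ≤
        ENNReal.ofReal (c * Real.exp (-θ * a ^ (s + 1)))) :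
    ∃ C : ℝ, 0 < C ∧
      ∀ᵐ X ∂μ, ∃ R : ℝ, ∀ t : ℝ,
        ‖X t‖ ≤ (C * Real.log (|t| + 1)) ^ (1 / (s + 1)) + R := by
  have : BorelSpace C(ℝ, EuclideanSpace ℝ (Fin d)) := ⟨rfl⟩
  have hmp (n : ℤ) :=
    MeasurePreserving.mk (ContinuousMap.continuous_precomp _).measurable (hshift n)
  have hC : θ⁻¹ < 2 / θ := by rw [inv_eq_one_div]; gcongr; norm_num
  exact ⟨2 / θ, by positivity, statement14_general (by positivity) hθ hC hmp htail⟩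
end
end
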